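/- Let $K$ and $M$ be positive integers and let $P_1, \dots, P_M$ be probability mass functions on a common finite set of $K$ elements, with $p_{m,k} > 0$ for all $m, k$. Then $\mathcal{D}_{GCS}(P_1, \dots, P_M) = 0$ if and only if $P_1 = P_2 = \dots = P_M$, i.e., $p_{1,k} = p_{2,k} = \dots = p_{M,k}$ for every $k$. -/

import Mathlib

/-!
Normalise each distribution in `ℓ^M`: put `a m k = P m k / c m` with
`c m = (∑ k, P m k ^ M) ^ (1 / M)`, so that `∑ k, a m k ^ M = 1`. The argument of the logarithm is
then `∑ k, ∏ m, a m k`. For each `k`, AM-GM applied to the numbers `a m k ^ M` gives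
`∏ m, a m k ≤ (1 / M) ∑ m, a m k ^ M`, and the right-hand sides add up to `1`. So the ratio is `1`
iff AM-GM is an equality at every `k`, i.e. iff `a m k` does not depend on `m`
(`sum_prod_eq_one_iff`). Independence of `m` means that the `P m` are proportional, and as each
`P m` has total mass `1`, that they are equal.
-/

/-- The generalized Cauchy–Schwarz (GCS) divergence among `M` probability mass
functions `P 1, …, P M` on a common finite set of `K` elements. -/
noncomputable def DGCS {K M : ℕ} (P : Fin M → Fin K → ℝ) : ℝ :=
  -Real.log ((∑ k : Fin K, ∏ m : Fin M, P m k) /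
    ∏ m : Fin M, (∑ k : Fin K, (P m k) ^ M) ^ ((1 : ℝ) / M))

/-- AM-GM for the `M`-th powers of `M` nonnegative numbers, with its equality case. -/
lemma prod_le_mean_pow {M : ℕ} (hM : 0 < M) (b : Fin M → ℝ) (hb : ∀ m, 0 ≤ b m) :
    ∏ m, b m ≤ ∑ m, (1 / M : ℝ) * b m ^ M ∧
      (∏ m, b m = ∑ m, (1 / M : ℝ) * b m ^ M ↔ ∀ m m', b m = b m') := by
  have hM' : (0 : ℝ) < M := by exact_mod_cast hM
  have hw : ∀ m ∈ Finset.univ, 0 < (fun _ : Fin M => (1 / M : ℝ)) m := fun _ _ => by positivity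
  have hw' : ∑ m, (fun _ : Fin M => (1 / M : ℝ)) m = 1 := by
    simp [hM'.ne']
  have hz : ∀ m ∈ Finset.univ, 0 ≤ (fun m => b m ^ M) m := fun m _ => pow_nonneg (hb m) M
  have hroot : ∏ m, (b m ^ M) ^ (1 / M : ℝ) = ∏ m, b m :=
    Finset.prod_congr rfl fun m _ => by
      rw [one_div, Real.pow_rpow_inv_natCast (hb m) hM.ne']
  have hle := Real.geom_mean_le_arith_mean_weighted Finset.univ _ _ (fun m h => (hw m h).le) hw' hz
  have heq := Real.geom_mean_eq_arith_mean_weighted_iff_of_pos Finset.univ _ _ hw hw' hz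
  simp only [hroot, Finset.mem_univ, true_implies] at hle heq
  refine ⟨hle, heq.trans (forall₂_congr fun m m' => ?_)⟩
  exact pow_left_inj₀ (hb m) (hb m') hM.ne'

/-- The equality case of the generalized Hölder inequality for vectors of unit `ℓ^M` norm. -/
lemma sum_prod_eq_one_iff {K M : ℕ} (hM : 0 < M) (a : Fin M → Fin K → ℝ)
    (ha : ∀ m k, 0 ≤ a m k) (hnorm : ∀ m, ∑ k, a m k ^ M = 1) :
    ∑ k, ∏ m, a m k = 1 ↔ ∀ k m m', a m k = a m' k := by
  have hM' : (M : ℝ) ≠ 0 := by exact_mod_cast hM.ne'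
  have key := fun k => prod_le_mean_pow hM (fun m => a m k) (fun m => ha m k)
  have hone : ∑ k, ∑ m, (1 / M : ℝ) * a m k ^ M = 1 := by
    rw [Finset.sum_comm]
    simp [← Finset.mul_sum, hnorm, hM']
  have h := Finset.sum_eq_sum_iff_of_le (s := Finset.univ) fun k _ => (key k).1
  rw [hone] at h
  simp only [Finset.mem_univ, true_implies] at h
  exact h.trans (forall_congr' fun k => (key k).2)

/-- Identity of indiscernibles for the generalized Cauchy–Schwarz divergence: for
`M` PMFs on `K` elements with strictly positive entries, `D_GCS(P_1, …, P_M) = 0`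
iff all the distributions coincide. -/
theorem DGCS_eq_zero_iff (K M : ℕ) (hK : 0 < K) (hM : 0 < M)
    (P : Fin M → Fin K → ℝ) (hpos : ∀ m k, 0 < P m k)
    (hsum : ∀ m, ∑ k : Fin K, P m k = 1) :
    DGCS P = 0 ↔ ∀ m m' : Fin M, ∀ k : Fin K, P m k = P m' k := by
  have hne : (Finset.univ : Finset (Fin K)).Nonempty := ⟨⟨0, hK⟩, Finset.mem_univ _⟩
  have hS : ∀ m, 0 < ∑ k, P m k ^ M := fun m =>
    Finset.sum_pos (fun k _ => pow_pos (hpos m k) M) hne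
  set c : Fin M → ℝ := fun m => (∑ k, P m k ^ M) ^ ((1 : ℝ) / M) with hc
  have hcpos : ∀ m, 0 < c m := fun m => Real.rpow_pos_of_pos (hS m) _
  have hcpow : ∀ m, c m ^ M = ∑ k, P m k ^ M := fun m => by
    simp only [hc, one_div]
    exact Real.rpow_inv_natCast_pow (hS m).le hM.ne'
  have hratio : (∑ k, ∏ m, P m k) / ∏ m, c m = ∑ k, ∏ m, P m k / c m := by
    simp only [Finset.prod_div_distrib, Finset.sum_div]
  have hrpos : 0 < ∑ k, ∏ m, P m k / c m :=
    Finset.sum_pos (fun k _ => Finset.prod_pos fun m _ => div_pos (hpos m k) (hcpos m)) hne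
  have hnorm : ∀ m, ∑ k, (P m k / c m) ^ M = 1 := fun m => by
    simp only [div_pow, ← Finset.sum_div, hcpow]
    exact div_self (hS m).ne'
  have hD : DGCS P = 0 ↔ ∑ k, ∏ m, P m k / c m = 1 := by
    rw [← hratio] at hrpos ⊢
    rw [DGCS, neg_eq_zero]
    exact ⟨Real.eq_one_of_pos_of_log_eq_zero hrpos, fun h => by rw [h, Real.log_one]⟩
  rw [hD, sum_prod_eq_one_iff hM (fun m k => P m k / c m)
    (fun m k => (div_pos (hpos m k) (hcpos m)).le) hnorm]
  constructor
  · intro h m m' k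
    -- Summing the proportionality over `k` compares the total masses, so the constants agree.
    have hcc : 1 / c m = 1 / c m' := by
      have := Finset.sum_congr rfl fun k (_ : k ∈ Finset.univ) => h k m m'
      simpa only [← Finset.sum_div, hsum] using this
    have hcc' : c m = c m' := by simpa using hcc
    have := h k m m'
    rw [hcc'] at this
    exact (div_left_inj' (hcpos m').ne').1 this
  · intro h k m m'
    have hP : P m = P m' := funext (h m m')
    simp only [hc, hP]
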